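/- Let R be a commutative Noetherian local ring and M a nonzero finitely generated R-module. Then depth R ≤ grade(M,R) + dim M ≤ dim R. -/

import Mathlib

open CategoryTheory CategoryTheory.Limits Opposite

noncomputable section

variable (R : Type) [CommRing R]

/-- The `i`-th Ext module of two `R`-modules. -/
def extMod (M N : Type) [AddCommGroup M] [Module R M] [AddCommGroup N] [Module R N]
    (i : ℕ) : ModuleCat R :=
  ((Ext R (ModuleCat.{0} R) i).obj (op (ModuleCat.of R M))).obj (ModuleCat.of R N)

/-- The `i`-th Tor module of two `R`-modules. -/
def torMod (M N : Type) [AddCommGroup M] [Module R M] [AddCommGroup N] [Module R N]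
    (i : ℕ) : ModuleCat R :=
  ((Tor (ModuleCat.{0} R) i).obj (ModuleCat.of R M)).obj (ModuleCat.of R N)

/-- `grade(M,N) = inf { i | Ext^i(M,N) ≠ 0 }`, as an extended natural number. -/
def extGrade (M N : Type) [AddCommGroup M] [Module R M] [AddCommGroup N] [Module R N] : ℕ∞ :=
  sInf {c : ℕ∞ | ∃ i : ℕ, c = i ∧ Nontrivial (extMod R M N i)}

/-- `P_R(M,N) = sup { i | Ext^i(M,N) ≠ 0 }`, as an extended natural number. -/
def extSup (M N : Type) [AddCommGroup M] [Module R M] [AddCommGroup N] [Module R N] : ℕ∞ :=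
  sSup {c : ℕ∞ | ∃ i : ℕ, c = i ∧ Nontrivial (extMod R M N i)}

/-- `depth(I, N)`: the supremum of lengths of `N`-regular sequences contained in `I`. -/
def idealDepth (I : Ideal R) (N : Type) [AddCommGroup N] [Module R N] : ℕ∞ :=
  ⨆ rs : {l : List R // (∀ r ∈ l, r ∈ I) ∧ RingTheory.Sequence.IsRegular N l},
    (rs.1.length : ℕ∞)

/-- The depth of a module over a local ring. -/
def moduleDepth [IsLocalRing R] (N : Type) [AddCommGroup N] [Module R N] : ℕ∞ :=
  idealDepth R (IsLocalRing.maximalIdeal R) N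

/-- The Krull dimension of a module: the sup of lengths of chains of primes in its support. -/
def moduleDim (M : Type) [AddCommGroup M] [Module R M] : ℕ∞ :=
  ⨆ c : LTSeries (Module.support R M), (c.length : ℕ∞)

/-- A quasi-projective resolution: a bounded-below complex of projectives whose homologies
are finite direct sums of copies of `M`, not all zero. -/
def IsQuasiProjRes (P : ChainComplex (ModuleCat.{0} R) ℤ)
    (M : Type) [AddCommGroup M] [Module R M] : Prop :=
  (∀ i, Projective (P.X i)) ∧
  (∃ n : ℤ, ∀ i < n, IsZero (P.X i)) ∧
  (∃ a : ℤ → ℕ, (∃ i, 0 < a i) ∧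
    ∀ i, Nonempty ((P.homology i) ≅ ModuleCat.of R (Fin (a i) → M)))

/-- Quasi-projective dimension: `inf { sup P - hsup P }` over bounded quasi-projective
resolutions `P` of `M`.  The condition `sup P - hsup P ≤ n` is encoded as the existence of
a degree `h` with nonzero homology such that `P` vanishes in degrees `> h + n`. -/
def qpd (M : Type) [AddCommGroup M] [Module R M] : ℕ∞ :=
  sInf {c : ℕ∞ | ∃ n : ℕ, c = n ∧ ∃ P : ChainComplex (ModuleCat.{0} R) ℤ,
    IsQuasiProjRes R P M ∧
    ∃ h : ℤ, ¬ IsZero (P.homology h) ∧ ∀ i, h + n < i → IsZero (P.X i)}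

/-- A quasi-injective resolution: a bounded-above complex of injectives whose homologies
are finite direct sums of copies of `M`, not all zero. -/
def IsQuasiInjRes (I : ChainComplex (ModuleCat.{0} R) ℤ)
    (M : Type) [AddCommGroup M] [Module R M] : Prop :=
  (∀ i, Injective (I.X i)) ∧
  (∃ n : ℤ, ∀ i > n, IsZero (I.X i)) ∧
  (∃ b : ℤ → ℕ, (∃ i, 0 < b i) ∧
    ∀ i, Nonempty ((I.homology i) ≅ ModuleCat.of R (Fin (b i) → M)))

/-- Quasi-injective dimension: `inf { hinf I - inf I }` over bounded quasi-injective
resolutions `I` of `M`. -/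
def qid (M : Type) [AddCommGroup M] [Module R M] : ℕ∞ :=
  sInf {c : ℕ∞ | ∃ n : ℕ, c = n ∧ ∃ I : ChainComplex (ModuleCat.{0} R) ℤ,
    IsQuasiInjRes R I M ∧
    ∃ h : ℤ, ¬ IsZero (I.homology h) ∧ ∀ i, i < h - n → IsZero (I.X i)}

/-- Projective dimension, via finite projective resolutions. -/
def projDim (M : Type) [AddCommGroup M] [Module R M] : ℕ∞ :=
  sInf {c : ℕ∞ | ∃ n : ℕ, c = n ∧ ∃ P : ChainComplex (ModuleCat.{0} R) ℤ,
    (∀ i, Projective (P.X i)) ∧ (∀ i : ℤ, (i < 0 ∨ (n : ℤ) < i) → IsZero (P.X i)) ∧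
    Nonempty ((P.homology 0) ≅ ModuleCat.of R M) ∧ ∀ i ≠ 0, IsZero (P.homology i)}

/-- Injective dimension, via finite injective resolutions (in degrees `-n, …, 0`). -/
def injDim (M : Type) [AddCommGroup M] [Module R M] : ℕ∞ :=
  sInf {c : ℕ∞ | ∃ n : ℕ, c = n ∧ ∃ I : ChainComplex (ModuleCat.{0} R) ℤ,
    (∀ i, Injective (I.X i)) ∧ (∀ i : ℤ, (0 < i ∨ i < -(n : ℤ)) → IsZero (I.X i)) ∧
    Nonempty ((I.homology 0) ≅ ModuleCat.of R M) ∧ ∀ i ≠ 0, IsZero (I.homology i)}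

/-- The depth of the localization `N_p` over the local ring `R_p`. -/
def localDepth (p : PrimeSpectrum R) (N : Type) [AddCommGroup N] [Module R N] : ℕ∞ :=
  idealDepth (Localization.AtPrime p.asIdeal)
    (IsLocalRing.maximalIdeal (Localization.AtPrime p.asIdeal))
    (LocalizedModule p.asIdeal.primeCompl N)

end

/-!
Both inequalities come from the Rees theorem, for the maximal ideal and for the annihilator of `M`.

For `depth R ≤ grade M + dim M`, Ischebeck's theorem `subsingleton_ext_of_supportDim_lt` says that
`Ext^i(M, R) = 0` whenever `i + dim M < depth R`. It is proved by induction on `dim M`: a prime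
filtration reduces it to `M = R/p`; the case of the residue field is the Rees theorem for the maximal
ideal, and otherwise multiplication by an element of the maximal ideal outside `p` lowers the
dimension and Nakayama's lemma applies.

For `grade M + dim M ≤ dim R`, the Rees theorem for the annihilator of `M` turns the vanishing of
`Ext^i(M, R)` for `i < n` into a regular sequence of length `n` in that annihilator
(`add_moduleDim_le`), and quotienting by a regular sequence lowers the dimension by its length.

Since `extMod` is built from left derived functors while the Rees theorem concerns `Ext` in the
derived category, `subsingleton_extMod_iff` compares their vanishing via a projective resolution.
-/

/-- `Ext^i(X, Y)` in the derived category vanishes iff `Hom(P, Y)` is exact in degree `i`, for `P` a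
projective resolution of `X`. For `i = 0` the junk value `prev 0 = 0` comes with a zero
differential, and exactness says that the kernel of `Hom(P₀, Y) → Hom(P₁, Y)` is zero. -/
lemma subsingleton_abelianExt_iff {R : Type} [CommRing R] {X Y : ModuleCat.{0} R}
    (P : ProjectiveResolution X) (i : ℕ) :
    Subsingleton (Abelian.Ext X Y i) ↔ ∀ f : P.complex.X i ⟶ Y,
      P.complex.d (i + 1) i ≫ f = 0 → ∃ g : P.complex.X ((ComplexShape.up ℕ).prev i) ⟶ Y,
        P.complex.d i ((ComplexShape.up ℕ).prev i) ≫ g = f := by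
  have key : Subsingleton (Abelian.Ext X Y i) ↔ ∀ (f : P.complex.X i ⟶ Y)
      (hf : P.complex.d (i + 1) i ≫ f = 0), P.extMk f (i + 1) rfl hf = 0 := by
    constructor
    · intro h f hf
      exact Subsingleton.elim _ _
    · intro h
      refine subsingleton_of_forall_eq 0 fun α ↦ ?_
      obtain ⟨f, hf, rfl⟩ := P.extMk_surjective α (i + 1) rfl
      exact h f hf
  rw [key]
  refine forall₂_congr fun f hf ↦ ?_
  cases i with
  | succ p =>
    rw [P.extMk_eq_zero_iff f _ rfl hf p rfl, CochainComplex.prev_nat_succ]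
  | zero =>
    rw [CochainComplex.prev_nat_zero, P.complex.shape 0 0 (by simp)]
    simp only [zero_comp, exists_const]
    constructor
    · intro h
      -- A coboundary factors through the term of `P` in cohomological degree `1`, which is zero.
      rw [← P.extEquivCohomologyClass.apply_eq_iff_eq,
        P.extEquivCohomologyClass_extMk, P.extEquivCohomologyClass_zero,
        CochainComplex.HomComplex.CohomologyClass.mk_eq_zero_iff,
        CochainComplex.HomComplex.Cocycle.toSingleMk_mem_coboundaries_iff _ _ _ _ _ 1 (by lia)] at h
      obtain ⟨g, hg⟩ := h
      have hz : IsZero (P.cochainComplex.X 1) :=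
        P.cochainComplex.isZero_of_isStrictlyLE 0 1
      rw [hz.eq_zero_of_src g, comp_zero] at hg
      rw [← cancel_epi (P.cochainComplexXIso (-((0 : ℕ) : ℤ)) 0 rfl).hom, ← hg, comp_zero]
    · rintro rfl
      simp

/-- The left derived functors of `Hom(-, N)` and the `Ext` of the derived category, for which
Mathlib has long exact sequences and the Rees theorem, vanish in the same degrees. -/
lemma subsingleton_extMod_iff {R : Type} [CommRing R]
    (M N : Type) [AddCommGroup M] [Module R M] [AddCommGroup N] [Module R N] (i : ℕ) :
    Subsingleton (extMod R M N i) ↔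
      Subsingleton (Abelian.Ext (ModuleCat.of R M) (ModuleCat.of R N) i) := by
  let P := projectiveResolution (ModuleCat.of R M)
  rw [subsingleton_abelianExt_iff P, ← ModuleCat.isZero_iff_subsingleton, extMod,
    (P.isoExt i (ModuleCat.of R N)).isZero_iff,
    ← HomologicalComplex.exactAt_iff_isZero_homology,
    HomologicalComplex.exactAt_iff' _ _ i (i + 1) rfl (by simp),
    ShortComplex.moduleCat_exact_iff]
  rfl

lemma subsingleton_ext_of_subsingleton {R : Type} [CommRing R] (M N : Type) [AddCommGroup M]
    [Module R M] [AddCommGroup N] [Module R N] [Subsingleton M] (i : ℕ) :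
    Subsingleton (Abelian.Ext (ModuleCat.of R M) (ModuleCat.of R N) i) :=
  subsingleton_of_forall_eq 0 fun α ↦ by
    rw [← α.mk₀_id_comp, (ModuleCat.isZero_of_subsingleton (ModuleCat.of R M)).eq_of_src (𝟙 _) 0]
    simp

open RingTheory.Sequence IsLocalRing in
/-- Ischebeck's theorem: if the maximal ideal contains an `N`-regular sequence of length `n`, then
`Ext^i(M, N) = 0` for `i + dim M < n`. Strict bounds `dim M < d` and `i + d ≤ n` make the case
`d = 0` say `M = 0`, so that the induction on `d` has a trivial base. -/
lemma subsingleton_ext_of_supportDim_lt {R : Type} [CommRing R] [IsNoetherianRing R]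
    [IsLocalRing R] (N : Type) [AddCommGroup N] [Module R N] [Module.Finite R N]
    (rs : List R) (mem : ∀ r ∈ rs, r ∈ maximalIdeal R) (reg : IsRegular N rs) (d : ℕ)
    (M : Type) [AddCommGroup M] [Module R M] [hM : Module.Finite R M] (i : ℕ) :
    Module.supportDim R M < d → i + d ≤ rs.length →
      Subsingleton (Abelian.Ext (ModuleCat.of R M) (ModuleCat.of R N) i) := by
  induction d generalizing M i with
  | zero =>
    intro hd _
    have : Subsingleton M := by
      by_contra h
      rw [not_subsingleton_iff_nontrivial, ← Module.supportDim_ne_bot_iff_nontrivial R] at h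
      exact hd.not_ge (Order.krullDim_nonneg_iff.mpr (not_isEmpty_iff.mp
        (mt Order.krullDim_eq_bot_iff.mpr h)))
    exact subsingleton_ext_of_subsingleton M N i
  | succ d ih =>
    induction hM using IsNoetherianRing.induction_on_isQuotientEquivQuotientPrime R generalizing i with
    | subsingleton M =>
      intros
      exact subsingleton_ext_of_subsingleton M N i
    | exact M₁ M₂ M₃ f g hf hg hfg h₁ h₃ =>
      intro hd hi
      have e₁ := h₁ i ((Module.supportDim_le_of_injective f hf).trans_lt hd) hi
      have e₃ := h₃ i ((Module.supportDim_le_of_surjective g hg).trans_lt hd) hi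
      let S : ShortComplex (ModuleCat.{0} R) :=
        ShortComplex.mk (ModuleCat.ofHom f) (ModuleCat.ofHom g)
          (by ext x; exact hfg.apply_apply_eq_zero x)
      have hS : S.ShortExact := by
        refine ShortComplex.ShortExact.mk' ?_ ?_ ?_
        · exact (ShortComplex.ShortExact.moduleCat_exact_iff_function_exact S).mpr hfg
        · exact (ModuleCat.mono_iff_injective _).mpr hf
        · exact (ModuleCat.epi_iff_surjective _).mpr hg
      refine subsingleton_of_forall_eq 0 fun α ↦ ?_
      obtain ⟨β, rfl⟩ := Abelian.Ext.contravariant_sequence_exact₂ hS (ModuleCat.of R N) α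
        (e₁.elim _ _)
      rw [e₃.elim β 0, Abelian.Ext.comp_zero]
    | quotient M p e =>
      intro hd hi
      -- If `p` is the maximal ideal, the Rees theorem applies. Otherwise some `x ∉ p` in the
      -- maximal ideal is `M`-regular and `dim M/xM < dim M`, so `Ext^(i+1)(M/xM, N) = 0`; then `x`
      -- acts surjectively on the finite module `Ext^i(M, N)`, which vanishes by Nakayama.
      by_cases hp : maximalIdeal R ≤ p.1
      · refine ModuleCat.subsingleton_ext_of_exists_isRegular (maximalIdeal R) (ModuleCat.of R M) ?_
          (ModuleCat.of R N) ?_ rs mem reg i (by lia)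
        · rw [e.support_eq, Module.support_eq_zeroLocus, Ideal.annihilator_quotient]
          exact PrimeSpectrum.zeroLocus_anti_mono hp
        · have := reg.nontrivial
          rw [lt_top_iff_ne_top]
          exact (Submodule.top_ne_ideal_smul_of_le_jacobson_annihilator
            (maximalIdeal_le_jacobson _)).symm
      · obtain ⟨x, hx, hxp⟩ := SetLike.not_le_iff_exists.mp hp
        have hreg : IsSMulRegular M x := by
          rw [e.isSMulRegular_congr, isSMulRegular_iff_right_eq_zero_of_smul]
          intro y hy
          obtain ⟨y, rfl⟩ := Ideal.Quotient.mk_surjective y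
          rw [← Ideal.Quotient.mk_eq_mk, ← Submodule.Quotient.mk_smul] at hy
          exact Ideal.Quotient.eq_zero_iff_mem.mpr ((p.2.mem_or_mem
            (Ideal.Quotient.eq_zero_iff_mem.mp hy)).resolve_left hxp)
        have hQ : Module.supportDim R (QuotSMulTop x M) < d := by
          rw [← Module.supportDim_quotSMulTop_succ_eq_supportDim hreg hx] at hd
          push_cast at hd
          exact lt_of_add_lt_add_right hd
        have hE := ih (QuotSMulTop x M) (i + 1) hQ (by lia)
        have hS := (show IsSMulRegular (ModuleCat.of R M) x from hreg).smulShortComplex_shortExact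
        have hle : (⊤ : Submodule R (Abelian.Ext (ModuleCat.of R M) (ModuleCat.of R N) i)) ≤
            maximalIdeal R • ⊤ := by
          intro α _
          obtain ⟨β, rfl⟩ := Abelian.Ext.contravariant_sequence_exact₁ hS (ModuleCat.of R N) α
            (add_comm 1 i) (hE.elim _ _)
          have hsmul (γ : Abelian.Ext (ModuleCat.of R M) (ModuleCat.of R N) i) :
              (Abelian.Ext.mk₀ (x • 𝟙 (ModuleCat.of R M))).comp γ (zero_add i) = x • γ := by
            rw [Abelian.Ext.mk₀_smul, Abelian.Ext.smul_comp, Abelian.Ext.mk₀_id_comp]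
          rw [ModuleCat.smulShortComplex_f_eq_smul_id]
          exact (hsmul β).symm ▸ Submodule.smul_mem_smul hx trivial
        have hbot := Submodule.eq_bot_of_le_smul_of_le_jacobson_bot _ _ Module.Finite.fg_top hle
          (maximalIdeal_le_jacobson _)
        exact (Submodule.subsingleton_iff R).mp (subsingleton_of_bot_eq_top hbot.symm)

/-- `Module.supportDim` takes values in `WithBot ℕ∞`, and is `⊥` for the zero module, where
`moduleDim` is `0`. -/
lemma supportDim_eq_moduleDim (R : Type) [CommRing R] (M : Type) [AddCommGroup M] [Module R M]
    [Nontrivial M] : Module.supportDim R M = moduleDim R M := by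
  have : Nonempty (Module.support R M) := Module.nonempty_support_of_nontrivial.to_subtype
  exact Order.krullDim_eq_iSup_length

/-- By the Rees theorem the vanishing gives an `R`-regular sequence `r₁, …, rₙ` in the annihilator
of `M`, so that `dim M ≤ dim R/(r₁, …, rₙ) = dim R - n`. -/
lemma add_moduleDim_le (R : Type) [CommRing R] [IsNoetherianRing R] [IsLocalRing R]
    (M : Type) [AddCommGroup M] [Module R M] [Module.Finite R M] [Nontrivial M] (n : ℕ)
    (h : ∀ i < n, Subsingleton (Abelian.Ext (ModuleCat.of R M) (ModuleCat.of R R) i)) :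
    n + moduleDim R M ≤ moduleDim R R := by
  have hI : Module.annihilator R M ≠ ⊤ := by
    rwa [Ne, Module.annihilator_eq_top_iff, not_subsingleton_iff_nontrivial]
  obtain ⟨rs, rfl, mem, reg⟩ := ModuleCat.exists_isRegular_of_exists_subsingleton_ext
    (Module.annihilator R M) n (ModuleCat.of R R) (by simpa [lt_top_iff_ne_top] using hI)
    (ModuleCat.of R M) (Module.support_eq_zeroLocus) h
  have hle : Ideal.ofList rs ≤ Module.annihilator R M := Ideal.span_le.mpr mem
  have h1 : Module.supportDim R M ≤ ringKrullDim (R ⧸ Ideal.ofList rs) := by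
    rw [Module.supportDim_eq_ringKrullDim_quotient_annihilator]
    exact ringKrullDim_le_of_surjective (Ideal.Quotient.factor hle)
      (Ideal.Quotient.factor_surjective hle)
  have h2 := ringKrullDim_add_length_eq_ringKrullDim_of_isRegular rs reg
  rw [← Module.supportDim_self_eq_ringKrullDim (R := R), supportDim_eq_moduleDim R R] at h2
  rw [supportDim_eq_moduleDim] at h1
  have := (add_le_add_left h1 (rs.length : WithBot ℕ∞)).trans h2.le
  rw [add_comm]
  exact_mod_cast this

/-- `depth R ≤ grade M + dim M ≤ dim R` over a Noetherian local ring. -/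
theorem stmt3 (R : Type) [CommRing R] [IsNoetherianRing R] [IsLocalRing R]
    (M : Type) [AddCommGroup M] [Module R M] [Module.Finite R M] (hM : Nontrivial M) :
    moduleDepth R R ≤ extGrade R M R + moduleDim R M ∧
      extGrade R M R + moduleDim R M ≤ moduleDim R R := by
  constructor
  · refine iSup_le fun ⟨rs, mem, reg⟩ ↦ ?_
    rcases eq_or_ne (moduleDim R M) ⊤ with hd | hd
    · simp [hd]
    obtain ⟨d, hd⟩ := ENat.ne_top_iff_exists.mp hd
    rw [← hd]
    by_contra! hlt
    have hne : extGrade R M R ≠ ⊤ := by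
      rintro h
      simp [h] at hlt
    obtain ⟨i, hi, hnt⟩ : extGrade R M R ∈
        {c : ℕ∞ | ∃ i : ℕ, c = i ∧ Nontrivial (extMod R M R i)} :=
      csInf_mem (Set.nonempty_iff_ne_empty.mpr fun h ↦ hne (by rw [extGrade, h, sInf_empty]))
    rw [hi] at hlt
    refine not_subsingleton_iff_nontrivial.mpr hnt ((subsingleton_extMod_iff M R i).mpr
      (subsingleton_ext_of_supportDim_lt R rs mem reg (d + 1) M i ?_ ?_))
    · rw [supportDim_eq_moduleDim, ← hd]
      exact_mod_cast d.lt_succ_self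
    · have : i + d < rs.length := by exact_mod_cast hlt
      lia
  · have key (n : ℕ) (hn : n ≤ extGrade R M R) : n + moduleDim R M ≤ moduleDim R R := by
      refine add_moduleDim_le R M n fun i hi ↦ (subsingleton_extMod_iff M R i).mp ?_
      by_contra hnt
      rw [not_subsingleton_iff_nontrivial] at hnt
      have : extGrade R M R ≤ i := sInf_le ⟨i, rfl, hnt⟩
      exact absurd (hn.trans this) (by simpa using hi)
    -- An infinite grade would force `dim R = ⊤`, so it needs no separate exclusion.
    rcases eq_or_ne (extGrade R M R) ⊤ with h | h
    · rw [h, top_add, top_le_iff, ENat.eq_top_iff_forall_ge]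
      exact fun n ↦ le_self_add.trans (key n (by simp [h]))
    · obtain ⟨g, hg⟩ := ENat.ne_top_iff_exists.mp h
      rw [← hg]
      exact key g hg.le
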